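/- arXiv:1805.02156 — 3 statements merged into one kernel-verified Lean document; each statement's English description precedes it below -/
import Mathlib

section
/- Let t ≥ 1 and d ≥ 3, and let G be a finite tree of maximum degree at most d. Then the distance-t chromatic number of G is at most τ_t(d), where τ_t(d) = (d(d-1)^{t/2} - 2)/(d-2) if t is even and τ_t(d) = (2(d-1)^{(t+1)/2} - 2)/(d-2) if t is odd. -/
open SimpleGraph

/-- A distance-`t` vertex-colouring with `n` colours: distinct vertices at distance at most
`t` get distinct colours. -/
def DistVertexColorable {V : Type*} (G : SimpleGraph V) (t n : ℕ) : Prop :=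
  ∃ c : V → Fin n, ∀ u v : V, u ≠ v → G.edist u v ≤ (t : ℕ∞) → c u ≠ c v

/-- `τ_t(d)`. -/
def tau (t d : ℕ) : ℕ :=
  if Even t then (d * (d - 1) ^ (t / 2) - 2) / (d - 2)
  else (2 * (d - 1) ^ ((t + 1) / 2) - 2) / (d - 2)

/-- Iterated closed neighbourhoods. -/
noncomputable def nbhd {V : Type*} [Fintype V] (G : SimpleGraph V) (B : Finset V) : ℕ → Finset V
  | 0 => B
  | k + 1 => by
      classical
      exact nbhd G B k ∪ (nbhd G B k).biUnion (fun x => G.neighborFinset x)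

lemma mem_nbhd_succ {V : Type*} [Fintype V] (G : SimpleGraph V) (B : Finset V) (k : ℕ) (u : V) :
    u ∈ nbhd G B (k + 1) ↔ u ∈ nbhd G B k ∨ ∃ x ∈ nbhd G B k, G.Adj x u := by
  classical
  simp [nbhd]

lemma nbhd_mono {V : Type*} [Fintype V] (G : SimpleGraph V) (B : Finset V) {k l : ℕ}
    (h : k ≤ l) : nbhd G B k ⊆ nbhd G B l := by
  induction l, h using Nat.le_induction with
  | base => exact fun _ h => h
  | succ n _ ih => exact fun x hx => (mem_nbhd_succ G B n x).2 (Or.inl (ih hx))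

lemma walk_mem_nbhd {V : Type*} [Fintype V] (G : SimpleGraph V) (B : Finset V) {u a : V}
    (p : G.Walk u a) (ha : a ∈ B) : u ∈ nbhd G B p.length := by
  induction p with
  | nil => simpa [nbhd] using ha
  | cons h p ih =>
    rw [Walk.length_cons, mem_nbhd_succ]
    exact Or.inr ⟨_, ih ha, h.symm⟩

lemma mem_nbhd_of_dist {V : Type*} [Fintype V] (G : SimpleGraph V) (hG : G.Connected)
    (B : Finset V) {u a : V} {k : ℕ} (ha : a ∈ B) (h : G.dist u a ≤ k) : u ∈ nbhd G B k := by
  obtain ⟨p, hp⟩ := hG.exists_walk_length_eq_dist u a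
  exact nbhd_mono G B (hp ▸ h) (walk_mem_nbhd G B p ha)

lemma layer_succ {V : Type*} [Fintype V] [DecidableEq V] (G : SimpleGraph V) [DecidableRel G.Adj]
    (d : ℕ) (hdeg : ∀ v, G.degree v ≤ d) (B : Finset V) (k : ℕ) :
    (nbhd G B (k + 2) \ nbhd G B (k + 1)).card
      ≤ (nbhd G B (k + 1) \ nbhd G B k).card * (d - 1) := by
  refine le_trans (Finset.card_le_card (t := (nbhd G B (k + 1) \ nbhd G B k).biUnion
    (fun x => G.neighborFinset x \ nbhd G B k)) ?_) (Finset.card_biUnion_le_card_mul _ _ _ ?_)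
  · intro u hu
    rw [Finset.mem_sdiff, mem_nbhd_succ] at hu
    obtain ⟨h1 | ⟨x, hx, hxu⟩, h2⟩ := hu
    · exact absurd h1 h2
    · rw [mem_nbhd_succ] at h2
      push Not at h2
      simp only [Finset.mem_biUnion, Finset.mem_sdiff, mem_neighborFinset]
      exact ⟨x, ⟨hx, fun h => h2.2 x h hxu⟩, hxu, h2.1⟩
  · intro x hx
    rw [Finset.mem_sdiff, mem_nbhd_succ] at hx
    obtain ⟨h1 | ⟨y, hy, hyx⟩, h2⟩ := hx
    · exact absurd h1 h2
    · have : (G.neighborFinset x \ nbhd G B k) ⊆ (G.neighborFinset x).erase y := by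
        intro z hz
        rw [Finset.mem_sdiff] at hz
        exact Finset.mem_erase.2 ⟨fun h => hz.2 (h ▸ hy), hz.1⟩
      have h3 := Finset.card_le_card this
      rw [Finset.card_erase_of_mem (by simpa using hyx.symm), card_neighborFinset_eq_degree] at h3
      have := hdeg x
      omega

lemma card_nbhd {V : Type*} [Fintype V] [DecidableEq V] (G : SimpleGraph V) [DecidableRel G.Adj]
    (d : ℕ) (hdeg : ∀ v, G.degree v ≤ d) (B : Finset V) (c : ℕ)
    (h1 : (nbhd G B 1 \ nbhd G B 0).card ≤ c) (k : ℕ) :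
    (nbhd G B k).card ≤ B.card + c * ∑ i ∈ Finset.range k, (d - 1) ^ i := by
  have hl : ∀ k, (nbhd G B (k + 1) \ nbhd G B k).card ≤ c * (d - 1) ^ k := by
    intro k
    induction k with
    | zero => simpa using h1
    | succ k ih =>
      refine (layer_succ G d hdeg B k).trans ?_
      rw [pow_succ, ← mul_assoc]
      exact Nat.mul_le_mul_right _ ih
  induction k with
  | zero => simp [nbhd]
  | succ k ih =>
    rw [Finset.sum_range_succ, mul_add, ← add_assoc]
    have h2 := Finset.card_sdiff_add_card_eq_card (nbhd_mono G B (Nat.le_succ k))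
    have := hl k
    simp only [Nat.succ_eq_add_one] at h2
    omega

lemma card_nbhd_single {V : Type*} [Fintype V] (G : SimpleGraph V) [DecidableRel G.Adj]
    (d : ℕ) (hdeg : ∀ v, G.degree v ≤ d) (x : V) (k : ℕ) :
    (nbhd G {x} k).card ≤ 1 + d * ∑ i ∈ Finset.range k, (d - 1) ^ i := by
  classical
  have := card_nbhd G d hdeg {x} d ?_ k
  · simpa using this
  · refine le_trans (Finset.card_le_card (t := G.neighborFinset x) ?_) (by simpa using hdeg x)
    intro u hu
    rw [Finset.mem_sdiff, mem_nbhd_succ] at hu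
    simp only [nbhd, Finset.mem_singleton] at hu
    simp only [mem_neighborFinset]
    grind

lemma card_nbhd_pair {V : Type*} [Fintype V] [DecidableEq V] (G : SimpleGraph V)
    [DecidableRel G.Adj] (d : ℕ) (hdeg : ∀ v, G.degree v ≤ d) (x y : V) (h : G.Adj x y) (k : ℕ) :
    (nbhd G {x, y} k).card ≤ 2 * ∑ i ∈ Finset.range (k + 1), (d - 1) ^ i := by
  have := card_nbhd G d hdeg {x, y} (2 * (d - 1)) ?_ k
  · rw [Finset.card_pair h.ne] at this
    rw [Finset.sum_range_succ', pow_zero]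
    simp only [pow_succ, ← Finset.sum_mul]
    nlinarith
  · refine le_trans (Finset.card_le_card (t := (G.neighborFinset x).erase y ∪
      (G.neighborFinset y).erase x) ?_) ?_
    · intro u hu
      rw [Finset.mem_sdiff, mem_nbhd_succ] at hu
      simp only [nbhd, Finset.mem_singleton, Finset.mem_insert] at hu
      simp only [mem_neighborFinset, Finset.mem_union, Finset.mem_erase]
      grind
    · refine (Finset.card_union_le _ _).trans ?_
      rw [Finset.card_erase_of_mem (by simpa using h),
        Finset.card_erase_of_mem (by simpa using h.symm), card_neighborFinset_eq_degree,
        card_neighborFinset_eq_degree]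
      have := hdeg x
      have := hdeg y
      omega

lemma tau_even (k d : ℕ) (hd : 3 ≤ d) :
    tau (2 * k) d = 1 + d * ∑ i ∈ Finset.range k, (d - 1) ^ i := by
  obtain ⟨e, rfl⟩ : ∃ e, d = e + 3 := ⟨d - 3, by omega⟩
  have h : (∑ i ∈ Finset.range k, (e + 2) ^ i) * (e + 1) + 1 = (e + 2) ^ k :=
    geom_sum_mul_add (e + 1) k
  simp only [tau, even_two_mul, if_true, show e + 3 - 1 = e + 2 by omega,
    show e + 3 - 2 = e + 1 by omega, show 2 * k / 2 = k by omega]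
  rw [← h]
  apply Nat.div_eq_of_eq_mul_left (by omega)
  apply Nat.sub_eq_of_eq_add
  ring

lemma tau_odd (k d : ℕ) (hd : 3 ≤ d) :
    tau (2 * k + 1) d = 2 * ∑ i ∈ Finset.range (k + 1), (d - 1) ^ i := by
  obtain ⟨e, rfl⟩ : ∃ e, d = e + 3 := ⟨d - 3, by omega⟩
  have h : (∑ i ∈ Finset.range (k + 1), (e + 2) ^ i) * (e + 1) + 1 = (e + 2) ^ (k + 1) :=
    geom_sum_mul_add (e + 1) (k + 1)
  have ho : ¬ Even (2 * k + 1) := by simp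
  simp only [tau, ho, if_false, show e + 3 - 1 = e + 2 by omega,
    show e + 3 - 2 = e + 1 by omega, show (2 * k + 1 + 1) / 2 = k + 1 by omega]
  rw [← h]
  apply Nat.div_eq_of_eq_mul_left (by omega)
  apply Nat.sub_eq_of_eq_add
  ring

lemma even_le_odd (k d : ℕ) (hd : 3 ≤ d) : tau (2 * k) d ≤ tau (2 * k + 1) d := by
  rw [tau_even k d hd, tau_odd k d hd]
  obtain ⟨e, rfl⟩ : ∃ e, d = e + 3 := ⟨d - 3, by omega⟩
  have h : (∑ i ∈ Finset.range k, (e + 2) ^ i) * (e + 1) + 1 = (e + 2) ^ k :=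
    geom_sum_mul_add (e + 1) k
  simp only [show e + 3 - 1 = e + 2 by omega]
  rw [Finset.sum_range_succ, ← h]
  generalize ∑ i ∈ Finset.range k, (e + 2) ^ i = s
  have : 0 ≤ s * e := Nat.zero_le _
  nlinarith

/-- A point on the path from `r` to `v` separates `u` from `r` or from `v`. -/
lemma tree_sep {V : Type*} (G : SimpleGraph V) (hG : G.IsTree) {r v a : V}
    (h : G.dist r a + G.dist a v = G.dist r v) (u : V) :
    G.dist u a + G.dist a v = G.dist u v ∨ G.dist u a + G.dist a r = G.dist u r := by
  classical
  have key : ∀ {x y z : V} (p : G.Walk x y), p.length = G.dist x y → z ∈ p.support →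
      G.dist x z + G.dist z y = G.dist x y := by
    intro x y z p hp hz
    have h1 := congrArg Walk.length (p.take_spec hz)
    rw [Walk.length_append] at h1
    have h2 := dist_le (p.takeUntil z hz)
    have h3 := dist_le (p.dropUntil z hz)
    have h4 := hG.connected.dist_triangle (u := x) (v := z) (w := y)
    omega
  obtain ⟨p1, hp1⟩ := hG.connected.exists_walk_length_eq_dist r a
  obtain ⟨p2, hp2⟩ := hG.connected.exists_walk_length_eq_dist a v
  obtain ⟨q1, hq1⟩ := hG.connected.exists_walk_length_eq_dist u v
  obtain ⟨q2, hq2⟩ := hG.connected.exists_walk_length_eq_dist u r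
  have hP : (p1.append p2).IsPath := by
    apply Walk.isPath_of_length_eq_dist
    rw [Walk.length_append]; omega
  have heq := congrArg Subtype.val (hG.isAcyclic.path_unique ⟨p1.append p2, hP⟩
    ⟨(q2.reverse.append q1).bypass, Walk.bypass_isPath _⟩)
  simp only at heq
  have ha : a ∈ (p1.append p2).support := by simp
  rw [heq] at ha
  have ha := Walk.support_bypass_subset_support _ ha
  rw [Walk.mem_support_append_iff, Walk.support_reverse, List.mem_reverse] at ha
  rcases ha with ha | ha
  · exact Or.inr (key q2 hq2 ha)
  · exact Or.inl (key q1 hq1 ha)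

/-- Points on the geodesic from `r` to `v`. -/
lemma geod {V : Type*} (G : SimpleGraph V) (hG : G.Connected) (r v : V) :
    ∃ a : ℕ → V, (∀ k ≤ G.dist r v, G.dist (a k) v = k ∧
      G.dist r (a k) + k = G.dist r v) ∧ ∀ k < G.dist r v, G.Adj (a k) (a (k + 1)) := by
  obtain ⟨p, hp⟩ := hG.exists_walk_length_eq_dist v r
  rw [dist_comm] at hp
  refine ⟨p.getVert, ?_, ?_⟩
  · intro k hk
    have h1 := dist_le (p.take k)
    have h2 := dist_le (p.drop k)
    rw [Walk.take_length] at h1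
    rw [Walk.drop_length] at h2
    have h3 := hG.dist_triangle (u := r) (v := p.getVert k) (w := v)
    rw [dist_comm] at h1 h2
    omega
  · intro k hk
    exact p.adj_getVert_succ (by omega)

lemma cover {V : Type*} [Fintype V] (G : SimpleGraph V) [DecidableRel G.Adj]
    (t d : ℕ) (hd : 3 ≤ d) (hG : G.IsTree)
    (hdeg : ∀ v, G.degree v ≤ d) (r v : V) :
    ∃ S : Finset V, S.card ≤ tau t d ∧
      ∀ u, G.dist r u ≤ G.dist r v → G.dist u v ≤ t → u ∈ S := by
  classical
  obtain ⟨a, ha, hadj⟩ := geod G hG.connected r v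
  rcases Nat.even_or_odd' t with ⟨k, rfl | rfl⟩
  · by_cases hk : k ≤ G.dist r v
    · refine ⟨nbhd G {a k} k, (tau_even k d hd).symm ▸ card_nbhd_single G d hdeg (a k) k, ?_⟩
      intro u hu hut
      apply mem_nbhd_of_dist G hG.connected _ (Finset.mem_singleton_self (a k))
      obtain ⟨h1, h2⟩ := ha k hk
      have := tree_sep G hG (r := r) (v := v) (a := a k) (by omega) u
      rw [dist_comm (u := a k) (v := r), dist_comm (u := u) (v := r)] at this
      omega
    · refine ⟨nbhd G {r} k, (tau_even k d hd).symm ▸ card_nbhd_single G d hdeg r k, ?_⟩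
      intro u hu hut
      apply mem_nbhd_of_dist G hG.connected _ (Finset.mem_singleton_self r)
      rw [dist_comm]; omega
  · by_cases hk : k < G.dist r v
    · refine ⟨nbhd G {a k, a (k + 1)} k, (tau_odd k d hd).symm ▸
        card_nbhd_pair G d hdeg _ _ (hadj k hk) k, ?_⟩
      intro u hu hut
      obtain ⟨h1, h2⟩ := ha k hk.le
      obtain ⟨h3, h4⟩ := ha (k + 1) hk
      have e1 := tree_sep G hG (r := r) (v := v) (a := a k) (by omega) u
      have e2 := tree_sep G hG (r := r) (v := v) (a := a (k + 1)) (by omega) u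
      rw [dist_comm (v := r), dist_comm (u := u) (v := r)] at e1 e2
      have hne := hG.dist_ne_of_adj u (hadj k hk)
      have : G.dist u (a k) ≤ k ∨ G.dist u (a (k + 1)) ≤ k := by omega
      rcases this with h | h
      · exact mem_nbhd_of_dist G hG.connected _ (by simp) h
      · exact mem_nbhd_of_dist G hG.connected _ (by simp) h
    · refine ⟨nbhd G {r} k, le_trans ((tau_even k d hd).symm ▸ card_nbhd_single G d hdeg r k)
        (even_le_odd k d hd), ?_⟩
      intro u hu hut
      apply mem_nbhd_of_dist G hG.connected _ (Finset.mem_singleton_self r)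
      rw [dist_comm]; omega

/-- Every finite tree of maximum degree at most `d ≥ 3` has distance-`t`
chromatic number at most `τ_t(d)` (for `t ≥ 1`). -/
theorem stmt_4 {V : Type*} [Fintype V] (G : SimpleGraph V) [DecidableRel G.Adj]
    (t d : ℕ) (ht : 1 ≤ t) (hd : 3 ≤ d) (hG : G.IsTree)
    (hdeg : ∀ v, G.degree v ≤ d) :
    DistVertexColorable G t (tau t d) := by
  classical
  obtain ⟨r⟩ := hG.connected.nonempty
  have key : ∀ n : ℕ, ∀ S : Finset V, S.card = n → ∃ c : V → Fin (tau t d),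
      ∀ u ∈ S, ∀ v ∈ S, u ≠ v → G.dist u v ≤ t → c u ≠ c v := by
    intro n
    induction n with
    | zero =>
      intro S hS
      obtain ⟨T, hT, hm⟩ := cover G t d hd hG hdeg r r
      have : 0 < T.card := Finset.card_pos.2 ⟨r, hm r le_rfl (by simp)⟩
      refine ⟨fun _ => ⟨0, by omega⟩, ?_⟩
      rw [Finset.card_eq_zero] at hS
      simp [hS]
    | succ n ih =>
      intro S hS
      obtain ⟨v, hv, hmax⟩ := S.exists_max_image (fun x => G.dist r x)
        (Finset.card_pos.1 (by omega))
      obtain ⟨c, hc⟩ := ih (S.erase v) (by rw [Finset.card_erase_of_mem hv]; omega)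
      obtain ⟨T, hT, hm⟩ := cover G t d hd hG hdeg r v
      have hvT : v ∈ T := hm v le_rfl (by simp)
      have hlt : ((T.erase v).image c).card < Fintype.card (Fin (tau t d)) := by
        have h1 := Finset.card_image_le (s := T.erase v) (f := c)
        rw [Finset.card_erase_of_mem hvT] at h1
        have : 0 < T.card := Finset.card_pos.2 ⟨v, hvT⟩
        rw [Fintype.card_fin]
        omega
      obtain ⟨x, hx⟩ : ∃ x, x ∉ (T.erase v).image c := by
        by_contra! hcon
        rw [Finset.eq_univ_iff_forall.2 hcon, Finset.card_univ] at hlt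
        exact lt_irrefl _ hlt
      have hx' : ∀ u ∈ S, u ≠ v → G.dist u v ≤ t → c u ≠ x := by
        intro u hu huv hd heq
        exact hx (Finset.mem_image.2 ⟨u, Finset.mem_erase.2 ⟨huv, hm u (hmax u hu) hd⟩, heq⟩)
      refine ⟨Function.update c v x, ?_⟩
      intro u hu w hw huw hdist
      by_cases h1 : u = v
      · subst h1
        rw [Function.update_self, Function.update_of_ne huw.symm]
        exact (hx' w hw huw.symm (by rwa [dist_comm])).symm
      · by_cases h2 : w = v
        · subst h2
          rw [Function.update_self, Function.update_of_ne huw]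
          exact hx' u hu huw hdist
        · rw [Function.update_of_ne h1, Function.update_of_ne h2]
          exact hc u (Finset.mem_erase.2 ⟨h1, hu⟩) w (Finset.mem_erase.2 ⟨h2, hw⟩) huw hdist
  obtain ⟨c, hc⟩ := key _ Finset.univ rfl
  refine ⟨c, fun u v huv h => hc u (Finset.mem_univ _) v (Finset.mem_univ _) huv ?_⟩
  rw [← (hG.connected u v).coe_dist_eq_edist] at h
  exact_mod_cast h
end

section
/- For odd t ≥ 1 and d ≥ 3, let G be the planar graph obtained from an odd cycle u_1…u_ℓ of length ℓ ≥ t+2 by rooting d−2 copies of the tree T_{(t−1)/2,d} at each cycle vertex. Then the distance-t chromatic number of G satisfies χ_t(G) > τ_t(d). -/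
open SimpleGraph

/-- `τ_t(d)` for odd `t`. -/
def tauodd (t d : ℕ) : ℕ := (2 * (d - 1) ^ ((t + 1) / 2) - 2) / (d - 2)

lemma aux_card_val {ℓ : ℕ} [NeZero ℓ] (n : ℕ) (hn : n ≤ ℓ) :
    (Finset.univ.filter fun x : ZMod ℓ => x.val < n).card = n := by
  have : (Finset.univ.filter fun x : ZMod ℓ => x.val < n)
      = (Finset.range n).image (fun m : ℕ => (m : ZMod ℓ)) := by
    ext x
    simp only [Finset.mem_filter, Finset.mem_univ, true_and, Finset.mem_image, Finset.mem_range]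
    constructor
    · intro h
      exact ⟨x.val, h, by simp⟩
    · rintro ⟨m, hm, rfl⟩
      rw [ZMod.val_natCast, Nat.mod_eq_of_lt (by omega)]
      exact hm
  rw [this, Finset.card_image_of_injOn, Finset.card_range]
  intro a ha b hb hab
  simp only [Finset.coe_range, Set.mem_Iio] at ha hb
  have := congrArg ZMod.val hab
  simp only [ZMod.val_natCast] at this
  rwa [Nat.mod_eq_of_lt (by omega), Nat.mod_eq_of_lt (by omega)] at this

lemma aux_card_left {ℓ : ℕ} [NeZero ℓ] (n : ℕ) (hn : n ≤ ℓ) (i m : ZMod ℓ) :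
    (Finset.univ.filter fun x : ZMod ℓ => (x - i + m).val < n).card = n := by
  conv_rhs => rw [← aux_card_val (ℓ := ℓ) n hn]
  refine Finset.card_bij' (fun x _ => x - i + m) (fun y _ => y + i - m) ?_ ?_ ?_ ?_
  · intro a ha; simpa using ha
  · intro a ha; simp only [Finset.mem_filter, Finset.mem_univ, true_and] at ha ⊢
    have : a + i - m - i + m = a := by ring
    rwa [this]
  · intro a ha; ring
  · intro a ha; ring

lemma aux_card_right {ℓ : ℕ} [NeZero ℓ] (n : ℕ) (hn : n ≤ ℓ) (j m : ZMod ℓ) :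
    (Finset.univ.filter fun i : ZMod ℓ => (j - i + m).val < n).card = n := by
  conv_rhs => rw [← aux_card_val (ℓ := ℓ) n hn]
  refine Finset.card_bij' (fun x _ => j - x + m) (fun y _ => j + m - y) ?_ ?_ ?_ ?_
  · intro a ha; simpa using ha
  · intro a ha; simp only [Finset.mem_filter, Finset.mem_univ, true_and] at ha ⊢
    have : j - (j + m - a) + m = a := by ring
    rwa [this]
  · intro a ha; ring
  · intro a ha; ring

/-- number of vertices at height `h` above a cycle vertex -/
def auxN (e : ℕ) : ℕ → ℕ
  | 0 => 1
  | h + 1 => e * (e + 1) ^ h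

lemma auxN_sum (e k : ℕ) : ∑ h ∈ Finset.range (k + 1), auxN e h = (e + 1) ^ k := by
  induction k with
  | zero => simp [auxN]
  | succ k ih => rw [Finset.sum_range_succ, ih, auxN]; ring

lemma auxN_sum2 (e k : ℕ) : ∑ h ∈ Finset.range (k + 1), auxN e h * (2 * (k - h) + 2)
    = 2 * ∑ j ∈ Finset.range (k + 1), (e + 1) ^ j := by
  induction k with
  | zero => simp [auxN]
  | succ k ih =>
    have : ∀ h ∈ Finset.range (k + 1), auxN e h * (2 * (k + 1 - h) + 2)
        = auxN e h * (2 * (k - h) + 2) + 2 * auxN e h := by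
      intro h hh
      have : k + 1 - h = (k - h) + 1 := by have := Finset.mem_range.1 hh; omega
      rw [this]; ring
    rw [Finset.sum_range_succ, Finset.sum_congr rfl this, Finset.sum_add_distrib,
      ← Finset.mul_sum, auxN_sum, auxN, Finset.sum_range_succ _ (k + 1), mul_add 2, ← ih]
    simp
    ring

lemma aux_tau (e k : ℕ) (he : 0 < e) :
    tauodd (2 * k + 1) (e + 2) = 2 * ∑ j ∈ Finset.range (k + 1), (e + 1) ^ j := by
  unfold tauodd
  have h1 : (2 * k + 1 + 1) / 2 = k + 1 := by omega
  have h2 : ∀ n, e * ∑ j ∈ Finset.range n, (e + 1) ^ j + 1 = (e + 1) ^ n := by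
    intro n
    induction n with
    | zero => simp
    | succ n ih => rw [Finset.sum_range_succ, mul_add, pow_succ, ← ih]; nlinarith
  have h3 := h2 (k + 1)
  rw [h1]
  have h4 : e + 2 - 1 = e + 1 := by omega
  have h5 : e + 2 - 2 = e := by omega
  rw [h4, h5, ← h3]
  apply Nat.div_eq_of_eq_mul_right he
  have : e * (2 * ∑ j ∈ Finset.range (k + 1), (e + 1) ^ j)
    = 2 * (e * ∑ j ∈ Finset.range (k + 1), (e + 1) ^ j) := by ring
  rw [this]; omega

/-- The abstract counting argument. -/
lemma aux_count {V : Type*} [Fintype V] {ℓ : ℕ} [NeZero ℓ] (hodd : Odd ℓ) (n : ℕ) (hn : 0 < n)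
    (N : ZMod ℓ → V → Prop) (c : V → Fin n)
    (h1 : ∀ i v w, N i v → N i w → c v = c w → v = w)
    (h2 : ∀ i, Nat.card {v // N i v} = n)
    (h3 : ∀ v, Even (Nat.card {i // N i v})) : False := by
  classical
  have hb : ∀ i a, ∃ v, N i v ∧ c v = a := by
    intro i
    have hin : Function.Injective (fun v : {v // N i v} => c v.1) := by
      intro v w h
      exact Subtype.ext (h1 i _ _ v.2 w.2 h)
    have hbij := (Fintype.bijective_iff_injective_and_card _).2 ⟨hin, by
      rw [← Nat.card_eq_fintype_card, h2, Fintype.card_fin]⟩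
    intro a
    obtain ⟨v, hv⟩ := hbij.2 a
    exact ⟨v.1, v.2, hv⟩
  let a : Fin n := ⟨0, hn⟩
  have key := Finset.sum_card_bipartiteAbove_eq_sum_card_bipartiteBelow
    (s := (Finset.univ : Finset (ZMod ℓ))) (t := Finset.univ.filter fun v => c v = a) N
  have hL : ∀ i ∈ (Finset.univ : Finset (ZMod ℓ)),
      ((Finset.univ.filter fun v => c v = a).bipartiteAbove N i).card = 1 := by
    intro i _
    obtain ⟨v, hv, hc⟩ := hb i a
    rw [Finset.card_eq_one]
    refine ⟨v, ?_⟩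
    ext w
    simp only [Finset.bipartiteAbove, Finset.mem_filter, Finset.mem_univ, true_and,
      Finset.mem_singleton]
    constructor
    · rintro ⟨h, h'⟩
      exact h1 i _ _ h' hv (h.trans hc.symm)
    · rintro rfl
      exact ⟨hc, hv⟩
  rw [Finset.sum_congr rfl hL] at key
  simp only [Finset.sum_const, Finset.card_univ, ZMod.card, smul_eq_mul, mul_one] at key
  have : Even ℓ := by
    rw [key]
    apply Finset.even_sum
    intro v _
    have := h3 v
    rw [Nat.card_eq_fintype_card, Fintype.card_subtype] at this
    exact this
  exact (Nat.not_even_iff_odd.2 hodd) this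

lemma aux_dist {V : Type*} (G : SimpleGraph V) (hconn : G.Connected) {ℓ : ℕ}
    (u : ZMod ℓ → V) (hcyc : ∀ i : ZMod ℓ, G.Adj (u i) (u (i + 1))) (a : ZMod ℓ) (n : ℕ) :
    G.dist (u a) (u (a + n)) ≤ n := by
  induction n with
  | zero => simp
  | succ n ih =>
    have h := hconn.dist_triangle (u := u a) (v := u (a + n)) (w := u (a + n + 1))
    rw [SimpleGraph.dist_eq_one_iff_adj.2 (hcyc (a + n))] at h
    have : a + ((n + 1 : ℕ) : ZMod ℓ) = a + n + 1 := by push_cast; ring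
    rw [this]; omega

lemma aux_iter {V : Type*} (G : SimpleGraph V) (hconn : G.Connected)
    (p : V → V) (hp : ∀ v, G.Adj v (p v)) (n : ℕ) (v : V) : G.dist v (p^[n] v) ≤ n := by
  induction n generalizing v with
  | zero => simp
  | succ n ih =>
    have h := hconn.dist_triangle (u := v) (v := p v) (w := p^[n] (p v))
    rw [SimpleGraph.dist_eq_one_iff_adj.2 (hp v)] at h
    have := ih (p v)
    rw [Function.iterate_succ_apply]
    omega

lemma aux_height {V : Type*} (G : SimpleGraph V) (hconn : G.Connected) {ℓ : ℕ} [NeZero ℓ]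
    (u : ZMod ℓ → V) (hinj : Function.Injective u)
    (hcyc : ∀ i : ZMod ℓ, G.Adj (u i) (u (i + 1))) :
    ∃ (h : V → ℕ) (p : V → V), (∀ v, ∃ i, G.dist (u i) v = h v) ∧
      (∀ v i, h v ≤ G.dist (u i) v) ∧ (∀ v, G.Adj v (p v)) ∧
      (∀ v, 0 < h v → h (p v) + 1 = h v) ∧ (∀ i, p (u i) = u (i + 1)) := by
  classical
  have h1 : ∀ v, ∃ i, ∀ j, G.dist (u i) v ≤ G.dist (u j) v := fun v =>
    Finite.exists_min (fun i => G.dist (u i) v)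
  choose r hr using h1
  let h : V → ℕ := fun v => G.dist (u (r v)) v
  have h2 : ∀ v, ∃ w, G.Adj v w ∧ (0 < h v → h w + 1 = h v) ∧
      (∀ i, v = u i → w = u (i + 1)) := by
    intro v
    by_cases hv : ∃ i, v = u i
    · obtain ⟨i, rfl⟩ := hv
      refine ⟨u (i + 1), hcyc i, ?_, ?_⟩
      · intro h0
        have := hr (u i) i
        simp only [SimpleGraph.dist_self] at this
        simp only [h] at h0
        omega
      · intro j hj
        rw [hinj hj]
    · obtain ⟨W, hW⟩ := hconn.exists_walk_length_eq_dist v (u (r v))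
      generalize hx : u (r v) = x at W hW
      cases W with
      | nil => exact absurd ⟨_, hx.symm⟩ hv
      | @cons _ w _ ha q =>
        subst hx
        refine ⟨w, ha, ?_, fun i hi => absurd ⟨i, hi⟩ hv⟩
        intro _
        simp only [SimpleGraph.Walk.length_cons] at hW
        have a1 := SimpleGraph.dist_le q
        have a2 := hr w (r v)
        have a3 := hr v (r w)
        have a4 := hconn.dist_triangle (u := u (r w)) (v := w) (w := v)
        rw [SimpleGraph.dist_eq_one_iff_adj.2 ha.symm] at a4
        rw [SimpleGraph.dist_comm (u := v)] at hW
        rw [SimpleGraph.dist_comm (u := w)] at a1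
        simp only [h]
        omega
  choose p hp using h2
  exact ⟨h, p, fun v => ⟨r v, rfl⟩, fun v i => hr v i, fun v => (hp v).1,
    fun v => (hp v).2.1, fun i => (hp (u i)).2.2 i rfl⟩

theorem stmt_13 {V : Type*} [Fintype V] (G : SimpleGraph V) [DecidableRel G.Adj]
    (t d ℓ : ℕ) (ht : Odd t) (hd : 3 ≤ d) (hodd : Odd ℓ) (hℓ : t + 2 ≤ ℓ)
    (u : ZMod ℓ → V) (hinj : Function.Injective u)
    (hcyc : ∀ i : ZMod ℓ, G.Adj (u i) (u (i + 1)))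
    (hconn : G.Connected)
    (hone : G.edgeFinset.card = Fintype.card V)
    (hdegcyc : ∀ i : ZMod ℓ, G.degree (u i) = if (t - 1) / 2 = 0 then 2 else d)
    (hheight : ∀ v : V, ∃ i : ZMod ℓ, G.dist (u i) v ≤ (t - 1) / 2)
    (hinternal : ∀ v : V, (∀ i, v ≠ u i) →
      (∃ i, G.dist (u i) v < (t - 1) / 2) → G.degree v = d)
    (hleaf : ∀ v : V, (∀ i, v ≠ u i) →
      ¬ (∃ i, G.dist (u i) v < (t - 1) / 2) → G.degree v = 1) :
    ¬ DistVertexColorable G t (tauodd t d) := by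
  classical
  obtain ⟨k, rfl⟩ := ht
  obtain ⟨e, rfl⟩ : ∃ e, d = e + 2 := ⟨d - 2, by omega⟩
  have hk : (2 * k + 1 - 1) / 2 = k := by omega
  rw [hk] at hheight hinternal hleaf
  simp only [hk] at hdegcyc
  have : NeZero ℓ := ⟨by omega⟩
  obtain ⟨h, p, hh1, hh2, hp, hph, hpu⟩ := aux_height G hconn u hinj hcyc
  have hu0 : ∀ i, h (u i) = 0 := by
    intro i
    have := hh2 (u i) i
    simpa using this
  have h0u : ∀ v, h v = 0 → ∃ i, v = u i := by
    intro v hv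
    obtain ⟨i, hi⟩ := hh1 v
    rw [hv] at hi
    exact ⟨i, (hconn.dist_eq_zero_iff.1 hi).symm⟩
  have hle : ∀ v, h v ≤ k := by
    intro v
    obtain ⟨i, hi⟩ := hheight v
    exact (hh2 v i).trans hi
  have two_ne : ∀ i : ZMod ℓ, i + 1 + 1 ≠ i := by
    intro i hi
    have h2 : ((2 : ℕ) : ZMod ℓ) = 0 := by
      have : i + 1 + 1 = i + 2 := by ring
      rw [this] at hi
      simpa using hi
    rw [ZMod.natCast_eq_zero_iff] at h2
    have := Nat.le_of_dvd (by norm_num) h2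
    omega
  have hpp : ∀ v, p (p v) ≠ v := by
    intro v hv
    rcases Nat.eq_zero_or_pos (h v) with h0 | h0
    · obtain ⟨i, rfl⟩ := h0u v h0
      rw [hpu, hpu] at hv
      exact two_ne i (hinj hv)
    · have a := hph v h0
      rcases Nat.eq_zero_or_pos (h (p v)) with h3 | h3
      · obtain ⟨i, hi⟩ := h0u _ h3
        rw [hi, hpu] at hv
        rw [← hv, hu0] at h0
        omega
      · have b := hph _ h3
        rw [hv] at b
        omega
  have hadj : ∀ v w, G.Adj v w → w = p v ∨ v = p w := by
    let Φ : V → G.edgeSet := fun v => ⟨s(v, p v), hp v⟩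
    have hΦ : Function.Injective Φ := by
      intro v w hvw
      have := congrArg Subtype.val hvw
      simp only [Φ, Sym2.eq_iff] at this
      rcases this with ⟨a, _⟩ | ⟨a, b⟩
      · exact a
      · exact absurd (by rw [b, ← a]) (hpp v)
    have hs : Function.Surjective Φ := by
      refine ((Fintype.bijective_iff_injective_and_card Φ).2 ⟨hΦ, ?_⟩).2
      rw [← hone, SimpleGraph.edgeFinset_card]
    intro v w hvw
    obtain ⟨x, hx⟩ := hs ⟨s(v, w), hvw⟩
    have := congrArg Subtype.val hx
    simp only [Φ, Sym2.eq_iff] at this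
    rcases this with ⟨rfl, b⟩ | ⟨rfl, b⟩
    · exact Or.inl b.symm
    · exact Or.inr b.symm
  let ch : V → Finset V := fun v => Finset.univ.filter fun w => p w = v
  have hdeg : ∀ v, G.degree v = (ch v).card + 1 := by
    intro v
    have : G.neighborFinset v = insert (p v) (ch v) := by
      ext w
      simp only [SimpleGraph.mem_neighborFinset, Finset.mem_insert, ch, Finset.mem_filter,
        Finset.mem_univ, true_and]
      constructor
      · intro hw
        rcases hadj v w hw with a | a
        · exact Or.inl a
        · exact Or.inr a.symm
      · rintro (rfl | rfl)
        · exact hp v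
        · exact (hp w).symm
    rw [← SimpleGraph.card_neighborFinset_eq_degree, this, Finset.card_insert_of_notMem]
    simp only [ch, Finset.mem_filter, Finset.mem_univ, true_and]
    exact hpp v
  let S : ZMod ℓ → ℕ → Finset V := fun j n =>
    Finset.univ.filter fun v => h v = n ∧ p^[n] v = u j
  have hSm : ∀ j n v, v ∈ S j n ↔ h v = n ∧ p^[n] v = u j := by
    intro j n v
    simp only [S, Finset.mem_filter, Finset.mem_univ, true_and]
  clear_value S
  have hS : ∀ j n, n ≤ k → (S j n).card = auxN e n := by
    intro j n
    induction n with
    | zero =>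
      intro _
      rw [auxN, Finset.card_eq_one]
      refine ⟨u j, ?_⟩
      ext v
      simp only [hSm, Finset.mem_filter, Finset.mem_univ, true_and, Finset.mem_singleton,
        Function.iterate_zero, id]
      constructor
      · exact fun h => h.2
      · rintro rfl; exact ⟨hu0 j, rfl⟩
    | succ n ih =>
      intro hn
      rcases Nat.eq_zero_or_pos n with rfl | hn0
      · have : ch (u j) = insert (u (j - 1)) (S j 1) := by
          ext v
          simp only [hSm, ch, Finset.mem_filter, Finset.mem_univ, true_and, Finset.mem_insert,
            Function.iterate_one]
          constructor
          · intro hv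
            rcases Nat.eq_zero_or_pos (h v) with h0 | h0
            · left
              obtain ⟨i, rfl⟩ := h0u v h0
              rw [hpu] at hv
              rw [← hinj hv]; congr 1; ring
            · right
              have := hph v h0
              rw [hv, hu0] at this
              exact ⟨this.symm, hv⟩
          · rintro (rfl | h1)
            · rw [hpu]; congr 1; ring
            · exact h1.2
        have hc := congrArg Finset.card this
        rw [Finset.card_insert_of_notMem] at hc
        · have h1 := hdeg (u j)
          rw [hdegcyc, if_neg (by omega)] at h1
          simp only [auxN, pow_zero, mul_one, zero_add]
          omega
        · simp [hSm, hu0]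
      · have hmap : ∀ w ∈ S j (n + 1), p w ∈ S j n := by
          intro w hw
          simp only [hSm, Finset.mem_filter, Finset.mem_univ, true_and,
            Function.iterate_succ_apply] at hw ⊢
          have := hph w (by omega)
          exact ⟨by omega, hw.2⟩
        rw [Finset.card_eq_sum_card_fiberwise (f := p) (t := S j n) hmap]
        have hf : ∀ v ∈ S j n, ((S j (n + 1)).filter fun w => p w = v).card = e + 1 := by
          intro v hv
          have hv' := (hSm _ _ _).1 hv
          have : (S j (n + 1)).filter (fun w => p w = v) = ch v := by
            ext w
            simp only [hSm, ch, Finset.mem_filter, Finset.mem_univ, true_and,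
              Function.iterate_succ_apply]
            constructor
            · exact fun h => h.2
            · rintro rfl
              refine ⟨⟨?_, hv'.2⟩, rfl⟩
              rcases Nat.eq_zero_or_pos (h w) with h0 | h0
              · obtain ⟨i, rfl⟩ := h0u w h0
                rw [hpu, hu0] at hv'
                omega
              · have := hph w h0
                omega
          rw [this]
          have h1 := hdeg v
          rw [hinternal v] at h1
          · omega
          · rintro i rfl
            rw [hu0] at hv'
            omega
          · obtain ⟨i, hi⟩ := hh1 v
            exact ⟨i, by omega⟩
        rw [Finset.sum_congr rfl hf, Finset.sum_const, ih (by omega), smul_eq_mul]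
        obtain ⟨m, rfl⟩ : ∃ m, n = m + 1 := ⟨n - 1, by omega⟩
        simp only [auxN]
        ring
  have hroot : ∀ v, ∃ j, p^[h v] v = u j := by
    have : ∀ n v, h v = n → ∃ j, p^[n] v = u j := by
      intro n
      induction n with
      | zero => intro v hv; exact h0u v hv
      | succ n ih =>
        intro v hv
        have := hph v (by omega)
        exact ih (p v) (by omega)
    exact fun v => this _ v rfl
  choose r hr using hroot
  have hdr : ∀ v, G.dist v (u (r v)) ≤ h v := by
    intro v
    rw [← hr]
    exact aux_iter G hconn p hp _ v
  let N : ZMod ℓ → V → Prop := fun i v =>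
    (r v - i + ((k - h v : ℕ) : ZMod ℓ)).val < 2 * (k - h v) + 2
  rintro ⟨c, hc⟩
  have htau := aux_tau e k (by omega)
  refine aux_count hodd (tauodd (2 * k + 1) (e + 2)) ?_ N c ?_ ?_ ?_
  · rw [htau, Finset.sum_range_succ]
    positivity
  · intro i v w hv hw hcvw
    by_contra hne
    refine hc v w hne ?_ hcvw
    have key : ∀ v w, N i v → N i w →
        (r v - i + ((k - h v : ℕ) : ZMod ℓ)).val + (k - h w)
          ≤ (r w - i + ((k - h w : ℕ) : ZMod ℓ)).val + (k - h v) →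
        G.dist v w ≤ 2 * k + 1 := by
      intro v w hv hw hvw
      have hv' : (r v - i + ((k - h v : ℕ) : ZMod ℓ)).val < 2 * (k - h v) + 2 := hv
      have hw' : (r w - i + ((k - h w : ℕ) : ZMod ℓ)).val < 2 * (k - h w) + 2 := hw
      have ev := ZMod.natCast_zmod_val (r v - i + ((k - h v : ℕ) : ZMod ℓ))
      have ew := ZMod.natCast_zmod_val (r w - i + ((k - h w : ℕ) : ZMod ℓ))
      generalize (r v - i + ((k - h v : ℕ) : ZMod ℓ)).val = x at *
      generalize (r w - i + ((k - h w : ℕ) : ZMod ℓ)).val = y at *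
      obtain ⟨z, hz⟩ := Nat.exists_eq_add_of_le hvw
      have hrw : r w = r v + z := by
        have := congrArg (Nat.cast : ℕ → ZMod ℓ) hz
        simp only [Nat.cast_add] at this
        rw [ev, ew] at this
        linear_combination this
      have d1 := aux_dist G hconn u hcyc (r v) z
      rw [← hrw] at d1
      have d2 := hconn.dist_triangle (u := v) (v := u (r v)) (w := w)
      have d3 := hconn.dist_triangle (u := u (r v)) (v := u (r w)) (w := w)
      have d4 := hdr v
      have d5 := hdr w
      rw [SimpleGraph.dist_comm] at d5
      have := hle v
      have := hle w
      omega
    have hd : G.dist v w ≤ 2 * k + 1 := by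
      rcases le_total ((r v - i + ((k - h v : ℕ) : ZMod ℓ)).val + (k - h w))
          ((r w - i + ((k - h w : ℕ) : ZMod ℓ)).val + (k - h v)) with h1 | h1
      · exact key v w hv hw h1
      · rw [SimpleGraph.dist_comm]; exact key w v hw hv h1
    rw [← (hconn v w).coe_dist_eq_edist]
    exact_mod_cast hd
  · intro i
    rw [Nat.card_eq_fintype_card, Fintype.card_subtype, htau, ← auxN_sum2]
    rw [Finset.card_eq_sum_card_fiberwise (f := h) (t := Finset.range (k + 1))]
    · apply Finset.sum_congr rfl
      intro n hn
      have hn' : n ≤ k := by have := Finset.mem_range.1 hn; omega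
      rw [Finset.card_eq_sum_card_fiberwise (f := r)
        (t := Finset.univ.filter fun x : ZMod ℓ =>
          (x - i + ((k - n : ℕ) : ZMod ℓ)).val < 2 * (k - n) + 2)]
      · have : ∀ j ∈ Finset.univ.filter (fun x : ZMod ℓ =>
            (x - i + ((k - n : ℕ) : ZMod ℓ)).val < 2 * (k - n) + 2),
            (((Finset.univ.filter fun v => N i v).filter fun v => h v = n).filter
              fun v => r v = j).card = auxN e n := by
          intro j hj
          rw [← hS j n hn']
          congr 1
          ext v
          simp only [hSm, N, Finset.mem_filter, Finset.mem_univ, true_and] at hj ⊢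
          constructor
          · rintro ⟨⟨_, rfl⟩, rfl⟩
            exact ⟨rfl, hr v⟩
          · rintro ⟨rfl, h2⟩
            rw [hr] at h2
            have := hinj h2
            subst this
            exact ⟨⟨hj, rfl⟩, rfl⟩
        rw [Finset.sum_congr rfl this, Finset.sum_const, aux_card_left _ (by omega), smul_eq_mul,
          mul_comm]
      · intro v hv
        simp only [N, Finset.coe_filter, Finset.mem_filter, Finset.mem_univ, true_and,
          Set.mem_setOf_eq] at hv ⊢
        obtain ⟨h1, rfl⟩ := hv
        exact h1
    · intro v _
      simpa [Nat.lt_succ_iff] using hle v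
  · intro v
    rw [Nat.card_eq_fintype_card, Fintype.card_subtype]
    simp only [N]
    rw [aux_card_right _ (by omega)]
    exact ⟨k - h v + 1, by ring⟩
end

section
/- Consequently, for every odd t ≥ 1, every d ≥ 3, and every g, there exists a planar graph G of maximum degree d and girth at least g with χ_t(G) > τ_t(d): no finite girth constraint makes the distance-t chromatic number of planar graphs tree-like for odd t. -/
open SimpleGraph

/-- `H` is a minor of `G`. -/
def IsMinorOf {W V : Type*} (H : SimpleGraph W) (G : SimpleGraph V) : Prop :=
  ∃ f : V → Option W,
    (∀ w : W, ∃ v, f v = some w) ∧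
    (∀ w : W, (G.induce {v | f v = some w}).Connected) ∧
    (∀ w₁ w₂ : W, H.Adj w₁ w₂ →
      ∃ v₁ v₂, f v₁ = some w₁ ∧ f v₂ = some w₂ ∧ G.Adj v₁ v₂)

/-- Planarity, via Wagner's theorem: no `K₅` minor and no `K_{3,3}` minor. -/
def IsPlanar {V : Type*} (G : SimpleGraph V) : Prop :=
  ¬ IsMinorOf (completeGraph (Fin 5)) G ∧
  ¬ IsMinorOf (completeBipartiteGraph (Fin 3) (Fin 3)) G

/-- The pseudoforest of a function `p`: each vertex is joined to its image. -/
def funGraph {V : Type*} (p : V → V) : SimpleGraph V := SimpleGraph.fromRel (fun u v => p u = v)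

lemma funGraph_adj {V : Type*} {p : V → V} {u v : V} (h : (funGraph p).Adj u v) :
    p u = v ∨ p v = u := by
  simp only [funGraph, SimpleGraph.fromRel_adj] at h
  exact h.2

/-- In a connected set at most one vertex escapes. -/
lemma escape_unique {V : Type*} {p : V → V} {B : Set V}
    (hB : ((funGraph p).induce B).Connected) {a b : V} (ha : a ∈ B) (hb : b ∈ B)
    (hpa : p a ∉ B) (hpb : p b ∉ B) : a = b := by
  have key : ∀ v : B, Relation.ReflTransGen (fun x y => p x = y ∧ y ∈ B) v.1 a := by
    intro v
    obtain ⟨w⟩ := hB.preconnected v ⟨a, ha⟩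
    generalize hz : (⟨a, ha⟩ : B) = z at w
    induction w with
    | nil => subst hz; exact Relation.ReflTransGen.refl
    | @cons u v w h q ih =>
      have ih := ih hz
      have h' : (funGraph p).Adj u.1 v.1 := h
      rcases funGraph_adj h' with h1 | h1
      · exact Relation.ReflTransGen.head ⟨h1, v.2⟩ ih
      · rcases Relation.ReflTransGen.cases_head ih with h2 | ⟨y, ⟨h2, h3⟩, h4⟩
        · exfalso; apply hpa; rw [← h2, h1]; exact u.2
        · have : y = u.1 := h2.symm.trans h1
          rw [← this]; exact h4
  rcases Relation.ReflTransGen.cases_head (key ⟨b, hb⟩) with h2 | ⟨y, ⟨h2, h3⟩, h4⟩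
  · exact h2.symm
  · exact absurd (h2 ▸ h3) hpb

/-- A minor of a pseudoforest has at most as many edges as vertices. -/
lemma minor_card {V W : Type*} [Fintype W] [DecidableEq W] {p : V → V} {H : SimpleGraph W}
    [DecidableRel H.Adj] (h : IsMinorOf H (funGraph p)) :
    H.edgeFinset.card ≤ Fintype.card W := by
  obtain ⟨f, -, hc, ha⟩ := h
  have key : ∀ e : Sym2 W, ∃ w : W, e ∈ H.edgeFinset →
      ∃ v w', f v = some w ∧ f (p v) = some w' ∧ w ≠ w' ∧ e = s(w, w') := by
    intro e
    induction e using Sym2.ind with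
    | _ x y =>
      by_cases hxy : H.Adj x y
      · obtain ⟨v₁, v₂, h1, h2, h3⟩ := ha x y hxy
        rcases funGraph_adj h3 with h4 | h4
        · exact ⟨x, fun _ => ⟨v₁, y, h1, h4 ▸ h2, hxy.ne, rfl⟩⟩
        · exact ⟨y, fun _ => ⟨v₂, x, h2, h4 ▸ h1, hxy.ne', Sym2.eq_swap⟩⟩
      · exact ⟨x, fun h => absurd (by simpa using h) hxy⟩
  choose F hF using key
  rw [← Finset.card_univ]
  refine Finset.card_le_card_of_injOn F (fun _ _ => Finset.mem_coe.2 (Finset.mem_univ _)) ?_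
  intro e₁ h₁ e₂ h₂ h12
  obtain ⟨v, w, a1, a2, a3, a4⟩ := hF e₁ h₁
  obtain ⟨v', w', b1, b2, b3, b4⟩ := hF e₂ h₂
  rw [← h12] at b1 b3 b4
  have : v = v' := escape_unique (hc (F e₁)) a1 b1
    (by simp only [Set.mem_ofPred_eq, a2, Option.some.injEq]; exact a3.symm)
    (by simp only [Set.mem_ofPred_eq, b2, Option.some.injEq]; exact b3.symm)
  subst this
  have : w = w' := by rw [a2] at b2; exact Option.some.inj b2
  subst this
  rw [a4, b4]

lemma funGraph_planar {V : Type*} (p : V → V) : IsPlanar (funGraph p) := by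
  classical
  constructor
  · intro h
    have := minor_card h
    have h2 : (completeGraph (Fin 5)).edgeFinset.card = 10 := by decide
    simp at this h2
    omega
  · intro h
    have h1 := minor_card h
    have h2 : (completeBipartiteGraph (Fin 3) (Fin 3)).edgeFinset.card = 9 := by
      have h := SimpleGraph.encard_edgeSet_completeBipartiteGraph (W₁ := Fin 3) (W₂ := Fin 3)
      rw [← SimpleGraph.coe_edgeFinset, Set.encard_coe_eq_coe_finsetCard] at h
      simp only [ENat.card_eq_coe_fintype_card, Fintype.card_fin] at h
      have h' : (completeBipartiteGraph (Fin 3) (Fin 3)).edgeFinset.card = 3 * 3 := by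
        exact_mod_cast h
      exact h'
    have h3 : Fintype.card (Fin 3 ⊕ Fin 3) = 6 := by simp
    have h4 : (completeBipartiteGraph (Fin 3) (Fin 3)).edgeFinset.card ≤ 6 := by
      rw [← h3]; convert h1
    omega

/-- The support of a cycle in a pseudoforest is closed under the function. -/
lemma cycle_closed {V : Type*} [DecidableEq V] {p : V → V} {a : V} {w : (funGraph p).Walk a a}
    (hw : w.IsCycle) :
    ∃ S : Finset V, S.Nonempty ∧ S.card ≤ w.length ∧ ∀ v ∈ S, p v ∈ S := by
  have hmem : ∀ v, v ∈ w.support → v ∈ w.support.tail.toFinset := by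
    intro v hv
    rw [List.mem_toFinset]
    rw [SimpleGraph.Walk.mem_support_iff] at hv
    rcases hv with rfl | hv
    · exact SimpleGraph.Walk.end_mem_tail_support hw.not_nil
    · exact hv
  have hmem' : ∀ v, v ∈ w.support.tail.toFinset → v ∈ w.support := fun v hv =>
    List.mem_of_mem_tail (List.mem_toFinset.1 hv)
  set S := w.support.tail.toFinset with hS
  have hcard : S.card ≤ w.length := by
    refine (List.toFinset_card_le _).trans ?_
    simp
  refine ⟨S, ⟨a, hmem a (by simp)⟩, hcard, ?_⟩
  set T := S.filter (fun v => s(v, p v) ∈ w.edges) with hT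
  have h1 : w.edges.toFinset ⊆ T.image (fun v => s(v, p v)) := by
    intro e he
    rw [List.mem_toFinset] at he
    induction e using Sym2.ind with
    | _ x y =>
      rw [Finset.mem_image]
      have hadj := w.adj_of_mem_edges he
      rcases funGraph_adj hadj with h | h
      · refine ⟨x, ?_, by rw [h]⟩
        rw [hT, Finset.mem_filter, h]
        exact ⟨hmem _ (w.fst_mem_support_of_mem_edges he), he⟩
      · refine ⟨y, ?_, by rw [h]; exact Sym2.eq_swap⟩
        rw [hT, Finset.mem_filter, h]
        exact ⟨hmem _ (w.snd_mem_support_of_mem_edges he), by rw [Sym2.eq_swap]; exact he⟩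
  have h2 : w.edges.toFinset.card = w.length := by
    rw [List.toFinset_card_of_nodup hw.edges_nodup, SimpleGraph.Walk.length_edges]
  have h3 := (Finset.card_le_card h1).trans Finset.card_image_le
  have h4 : T = S := Finset.eq_of_subset_of_card_le (Finset.filter_subset _ _) (by omega)
  intro v hv
  rw [← h4, hT, Finset.mem_filter] at hv
  exact hmem _ (w.snd_mem_support_of_mem_edges hv.2)

lemma funGraph_edist {V : Type*} (p : V → V) (u : V) : (funGraph p).edist u (p u) ≤ 1 := by
  by_cases h : u = p u
  · rw [← h]; simp
  · refine le_of_eq (SimpleGraph.edist_eq_one_iff_adj.2 ?_)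
    simp [funGraph, h]

/-- The parent function: a cycle with `b`-ary heaps attached. -/
def par (n b k : ℕ) : ZMod n × Fin (b ^ k) → ZMod n × Fin (b ^ k) := fun v =>
  if v.2.1 = 0 then (v.1 + 1, v.2)
  else (v.1, ⟨v.2.1 / b, (Nat.div_le_self _ _).trans_lt v.2.2⟩)

lemma par_fiber (n b k : ℕ) (hb : 2 ≤ b) (v : ZMod n × Fin (b ^ k)) :
    {u | par n b k u = v}.ncard ≤ b := by
  have : ((Finset.range b : Finset ℕ) : Set ℕ).ncard = b := by
    rw [Set.ncard_coe_finset, Finset.card_range]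
  conv_rhs => rw [← this]
  refine Set.ncard_le_ncard_of_injOn (fun u => u.2.1 % b) ?_ ?_ (Finset.finite_toSet _)
  · intro u _
    simp only [Finset.coe_range, Set.mem_Iio]
    exact Nat.mod_lt _ (by omega)
  · rintro ⟨m, x, hx⟩ h1 ⟨m', x', hx'⟩ h2 h
    simp only [Set.mem_ofPred_eq] at h1 h2 h
    subst h2
    have e1 := Nat.div_add_mod x b
    have e2 := Nat.div_add_mod x' b
    unfold par at h1
    dsimp only at h1
    split_ifs at h1 with c1 c2 c2
    · simp only [Prod.mk.injEq, Fin.mk.injEq, add_left_inj] at h1 ⊢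
      exact h1
    · simp only [Prod.mk.injEq, Fin.mk.injEq] at h1
      subst c1
      rw [← h1.2, ← h] at e2
      simp at e2
      omega
    · simp only [Prod.mk.injEq, Fin.mk.injEq] at h1
      subst c2
      rw [h1.2, h] at e1
      simp at e1
      omega
    · simp only [Prod.mk.injEq, Fin.mk.injEq] at h1 ⊢
      rw [h1.2, h] at e1
      exact ⟨h1.1, by omega⟩

lemma par_degree (n b k : ℕ) [NeZero n] (hb : 2 ≤ b) (v : ZMod n × Fin (b ^ k)) :
    ((funGraph (par n b k)).neighborSet v).ncard ≤ b + 1 := by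
  have h1 : (funGraph (par n b k)).neighborSet v ⊆ insert (par n b k v) {u | par n b k u = v} := by
    intro u hu
    rcases funGraph_adj hu with h | h
    · left; exact h.symm
    · right; exact h
  have h2 := Set.ncard_le_ncard h1 (Set.toFinite _)
  have h3 := Set.ncard_insert_le (par n b k v) {u | par n b k u = v}
  have h4 := par_fiber n b k hb v
  omega

lemma par_girth (n b k : ℕ) [NeZero n] (hb : 2 ≤ b) :
    (n : ℕ∞) ≤ (funGraph (par n b k)).egirth := by
  classical
  rw [SimpleGraph.le_egirth]
  intro a w hw
  obtain ⟨S, ⟨⟨m, x, hx⟩, hS⟩, hc, hcl⟩ := cycle_closed hw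
  have hpos : 0 < b ^ k := Nat.pow_pos (by omega)
  have h0 : ∀ x (hx : x < b ^ k), (m, (⟨x, hx⟩ : Fin (b ^ k))) ∈ S →
      (m, (⟨0, hpos⟩ : Fin (b ^ k))) ∈ S := by
    intro x
    induction x using Nat.strong_induction_on with
    | _ x ih =>
      intro hx h
      by_cases h0 : x = 0
      · subst h0; exact h
      · have := hcl _ h
        simp only [par, h0, if_false] at this
        exact ih _ (Nat.div_lt_self (by omega) (by omega)) _ this
  have h1 := h0 x hx hS
  have h2 : ∀ j : ℕ, (m + j, (⟨0, hpos⟩ : Fin (b ^ k))) ∈ S := by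
    intro j
    induction j with
    | zero => simpa using h1
    | succ j ih =>
      have := hcl _ ih
      simp only [par, if_true] at this
      push_cast
      rw [← add_assoc]
      exact this
  have h3 : (Finset.univ.image (fun i : ZMod n => (i, (⟨0, hpos⟩ : Fin (b ^ k))))) ⊆ S := by
    intro u hu
    rw [Finset.mem_image] at hu
    obtain ⟨i, -, rfl⟩ := hu
    have := h2 (i - m).val
    rw [ZMod.natCast_zmod_val] at this
    simpa using this
  have h4 := Finset.card_le_card h3
  rw [Finset.card_image_of_injective _ (fun i j h => (Prod.mk.inj h).1), Finset.card_univ,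
    ZMod.card] at h4
  exact_mod_cast h4.trans hc

lemma edist_up (n b k : ℕ) (hb : 2 ≤ b) (hpos : 0 < b ^ k) (m : ZMod n) (s : ℕ) :
    ∀ x (hx : x < b ^ k), x < b ^ s →
      (funGraph (par n b k)).edist (m, ⟨x, hx⟩) (m, ⟨0, hpos⟩) ≤ (s : ℕ∞) := by
  induction s with
  | zero =>
    intro x hx h
    have : x = 0 := by simpa using h
    subst this
    simp
  | succ s ih =>
    intro x hx h
    by_cases h0 : x = 0
    · subst h0; simp
    · have h1 := funGraph_edist (par n b k) (m, ⟨x, hx⟩)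
      have h2 : par n b k (m, ⟨x, hx⟩) = (m, ⟨x / b, (Nat.div_le_self _ _).trans_lt hx⟩) := by
        simp [par, h0]
      rw [h2] at h1
      have h3 := ih (x / b) ((Nat.div_le_self _ _).trans_lt hx)
        (Nat.div_lt_of_lt_mul (by rw [pow_succ'] at h; exact h))
      refine SimpleGraph.edist_triangle.trans ((add_le_add h1 h3).trans ?_)
      push_cast
      rw [add_comm]

lemma edist_along (n b k : ℕ) (hpos : 0 < b ^ k) (m : ZMod n) (s : ℕ) :
    (funGraph (par n b k)).edist (m, ⟨0, hpos⟩) (m + s, ⟨0, hpos⟩) ≤ (s : ℕ∞) := by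
  induction s with
  | zero => simp
  | succ s ih =>
    have h1 := funGraph_edist (par n b k) (m + s, ⟨0, hpos⟩)
    have h2 : par n b k (m + s, ⟨0, hpos⟩) = (m + (s + 1 : ℕ), ⟨0, hpos⟩) := by
      simp [par, add_assoc]
    rw [h2] at h1
    refine SimpleGraph.edist_triangle.trans ((add_le_add ih h1).trans ?_)
    push_cast
    exact le_rfl

/-- Index set of one half of the ball around a cycle edge. -/
abbrev HalfIdx (b k : ℕ) : Type := Σ r : Fin (k + 1), Fin (b ^ (k - r.1))

/-- Position in the heap. -/
def hpt (b k : ℕ) (hb : 2 ≤ b) (y : HalfIdx b k) : Fin (b ^ k) :=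
  ⟨y.2.1, y.2.2.trans_le (Nat.pow_le_pow_right (by omega) (Nat.sub_le _ _))⟩

/-- The ball around the cycle edge `{i, i+1}`. -/
def ballPt (n b k : ℕ) (hb : 2 ≤ b) (i : ZMod n) :
    HalfIdx b k ⊕ HalfIdx b k → ZMod n × Fin (b ^ k)
  | Sum.inl y => (i - (y.1.1 : ZMod n), hpt b k hb y)
  | Sum.inr y => (i + 1 + (y.1.1 : ZMod n), hpt b k hb y)

lemma halfIdx_ext {b k : ℕ} {y z : HalfIdx b k} (h1 : y.1.1 = z.1.1) (h2 : y.2.1 = z.2.1) :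
    y = z := by
  obtain ⟨⟨r, hr⟩, x, hx⟩ := y
  obtain ⟨⟨r', hr'⟩, x', hx'⟩ := z
  dsimp at h1 h2
  subst h1
  subst h2
  rfl

lemma cast_inj_small {n a c : ℕ} (ha : a < n) (hc : c < n) (h : (a : ZMod n) = c) : a = c := by
  rw [ZMod.natCast_eq_natCast_iff] at h
  exact Nat.ModEq.eq_of_lt_of_lt h ha hc

lemma ballPt_inj (n b k : ℕ) (hb : 2 ≤ b) (hn : 2 * k + 2 ≤ n) (i : ZMod n) :
    Function.Injective (ballPt n b k hb i) := by
  have aux : ∀ y z : HalfIdx b k, i - (y.1.1 : ZMod n) ≠ i + 1 + (z.1.1 : ZMod n) := by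
    intro y z h
    have h1 : ((z.1.1 + y.1.1 + 1 : ℕ) : ZMod n) = (0 : ℕ) := by
      push_cast
      linear_combination -h
    have hy := y.1.2
    have hz := z.1.2
    have := cast_inj_small (by omega) (by omega) h1
    omega
  rintro (y | y) (z | z) h
  all_goals simp only [ballPt, hpt, Prod.mk.injEq, Fin.mk.injEq] at h
  · have hy := y.1.2
    have hz := z.1.2
    have := cast_inj_small (n := n) (by omega) (by omega) (sub_right_injective h.1)
    rw [halfIdx_ext this h.2]
  · exact absurd h.1 (aux _ _)
  · exact absurd h.1.symm (aux _ _)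
  · have hy := y.1.2
    have hz := z.1.2
    have := cast_inj_small (n := n) (by omega) (by omega) (add_left_cancel h.1)
    rw [halfIdx_ext this h.2]

lemma ball_inl (n b k : ℕ) (hb : 2 ≤ b) (hpos : 0 < b ^ k) (i : ZMod n) (y : HalfIdx b k) :
    (funGraph (par n b k)).edist (ballPt n b k hb i (Sum.inl y)) (i, ⟨0, hpos⟩) ≤ (k : ℕ∞) := by
  have h1 := edist_up n b k hb hpos (i - (y.1.1 : ZMod n)) (k - y.1.1) y.2.1 (hpt b k hb y).2 y.2.2
  have h2 := edist_along n b k hpos (i - (y.1.1 : ZMod n)) y.1.1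
  rw [sub_add_cancel] at h2
  refine SimpleGraph.edist_triangle.trans ((add_le_add h1 h2).trans ?_)
  have hy := y.1.2
  have : k - y.1.1 + y.1.1 = k := by omega
  exact_mod_cast this.le

lemma ball_inr (n b k : ℕ) (hb : 2 ≤ b) (hpos : 0 < b ^ k) (i : ZMod n) (y : HalfIdx b k) :
    (funGraph (par n b k)).edist (ballPt n b k hb i (Sum.inr y)) (i + 1, ⟨0, hpos⟩)
      ≤ (k : ℕ∞) := by
  have h1 := edist_up n b k hb hpos (i + 1 + (y.1.1 : ZMod n)) (k - y.1.1) y.2.1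
    (hpt b k hb y).2 y.2.2
  have h2 := edist_along n b k hpos (i + 1) y.1.1
  rw [SimpleGraph.edist_comm] at h2
  refine SimpleGraph.edist_triangle.trans ((add_le_add h1 h2).trans ?_)
  have hy := y.1.2
  have : k - y.1.1 + y.1.1 = k := by omega
  exact_mod_cast this.le

lemma ball_diam (n b k : ℕ) (hb : 2 ≤ b) (i : ZMod n) (y z : HalfIdx b k ⊕ HalfIdx b k) :
    (funGraph (par n b k)).edist (ballPt n b k hb i y) (ballPt n b k hb i z)
      ≤ ((2 * k + 1 : ℕ) : ℕ∞) := by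
  have hpos : 0 < b ^ k := Nat.pow_pos (by omega)
  have hmid : (funGraph (par n b k)).edist (i, ⟨0, hpos⟩) (i + 1, ⟨0, hpos⟩) ≤ ((1 : ℕ) : ℕ∞) := by
    simpa using edist_along n b k hpos i 1
  have tri : ∀ {u v w : ZMod n × Fin (b ^ k)} {p q : ℕ},
      (funGraph (par n b k)).edist u v ≤ (p : ℕ∞) → (funGraph (par n b k)).edist v w ≤ (q : ℕ∞) →
      (funGraph (par n b k)).edist u w ≤ ((p + q : ℕ) : ℕ∞) := by
    intro u v w p q h1 h2
    refine SimpleGraph.edist_triangle.trans ((add_le_add h1 h2).trans ?_)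
    push_cast
    exact le_rfl
  have up : ∀ {u v : ZMod n × Fin (b ^ k)} {p q : ℕ}, p ≤ q →
      (funGraph (par n b k)).edist u v ≤ (p : ℕ∞) →
      (funGraph (par n b k)).edist u v ≤ (q : ℕ∞) := by
    intro u v p q h1 h2
    exact h2.trans (by exact_mod_cast h1)
  rcases y with y | y <;> rcases z with z | z
  · have h2 := ball_inl n b k hb hpos i z
    rw [SimpleGraph.edist_comm] at h2
    exact up (by omega) (tri (ball_inl n b k hb hpos i y) h2)
  · have h2 := ball_inr n b k hb hpos i z
    rw [SimpleGraph.edist_comm] at h2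
    exact up (by omega) (tri (tri (ball_inl n b k hb hpos i y) hmid) h2)
  · have h2 := ball_inl n b k hb hpos i z
    rw [SimpleGraph.edist_comm] at h2
    rw [SimpleGraph.edist_comm] at hmid
    exact up (by omega) (tri (tri (ball_inr n b k hb hpos i y) hmid) h2)
  · have h2 := ball_inr n b k hb hpos i z
    rw [SimpleGraph.edist_comm] at h2
    exact up (by omega) (tri (ball_inr n b k hb hpos i y) h2)

lemma ball_card (e k : ℕ) (he : 1 ≤ e) :
    Fintype.card (HalfIdx (e + 1) k ⊕ HalfIdx (e + 1) k) = tauodd (2 * k + 1) (e + 2) := by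
  have h1 : Fintype.card (HalfIdx (e + 1) k) = ∑ s ∈ Finset.range (k + 1), (e + 1) ^ s := by
    rw [Fintype.card_sigma]
    simp only [Fintype.card_fin]
    rw [Fin.sum_univ_eq_sum_range (fun r => (e + 1) ^ (k - r)) (k + 1)]
    exact Finset.sum_range_reflect (fun r => (e + 1) ^ r) (k + 1)
  have h2 := geom_sum_mul_add e (k + 1)
  rw [Fintype.card_sum, h1]
  unfold tauodd
  have h3 : (2 * k + 1 + 1) / 2 = k + 1 := by omega
  have h4 : e + 2 - 1 = e + 1 := by omega
  have h5 : e + 2 - 2 = e := by omega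
  rw [h3, h4, h5, ← h2]
  set Q := ∑ s ∈ Finset.range (k + 1), (e + 1) ^ s
  have h6 : 2 * (Q * e + 1) - 2 = (Q + Q) * e := by
    have : (Q + Q) * e = 2 * (Q * e) := by ring
    omega
  rw [h6, Nat.mul_div_cancel _ (by omega)]

lemma not_colorable (n e k : ℕ) [NeZero n] (he : 1 ≤ e) (hn : 2 * k + 2 ≤ n) (hodd : Odd n) :
    ¬ DistVertexColorable (funGraph (par n (e + 1) k)) (2 * k + 1)
      (tauodd (2 * k + 1) (e + 2)) := by
  classical
  rintro ⟨c, hc⟩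
  have hb : 2 ≤ e + 1 := by omega
  set Y := HalfIdx (e + 1) k ⊕ HalfIdx (e + 1) k
  have hbij : ∀ i, Function.Bijective (fun y : Y => c (ballPt n (e + 1) k hb i y)) := by
    intro i
    rw [Fintype.bijective_iff_injective_and_card]
    refine ⟨?_, by rw [ball_card e k he, Fintype.card_fin]⟩
    intro y z h
    by_contra hne
    exact hc _ _ (fun h' => hne (ballPt_inj n (e + 1) k hb hn i h'))
      (ball_diam n (e + 1) k hb i y z) h
  let c0 := c (ballPt n (e + 1) k hb 0 (Sum.inl ⟨0, ⟨0, Nat.pow_pos (by omega)⟩⟩))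
  have hone : ∀ i, ∑ y : Y, (if c (ballPt n (e + 1) k hb i y) = c0 then 1 else 0) = 1 := by
    intro i
    obtain ⟨y, hy, hu⟩ := (hbij i).existsUnique c0
    rw [Finset.sum_eq_single y]
    · exact if_pos hy
    · intro z _ hz
      exact if_neg (fun h => hz (hu z h))
    · simp
  have htot : ∑ i : ZMod n, ∑ y : Y, (if c (ballPt n (e + 1) k hb i y) = c0 then 1 else 0) = n := by
    rw [Finset.sum_congr rfl (fun i _ => hone i)]
    simp [ZMod.card]
  rw [Finset.sum_comm, Fintype.sum_sum_type] at htot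
  have hl : ∀ y : HalfIdx (e + 1) k,
      ∑ i : ZMod n, (if c (ballPt n (e + 1) k hb i (Sum.inl y)) = c0 then 1 else 0)
      = ∑ i : ZMod n, (if c (i, hpt (e + 1) k hb y) = c0 then 1 else 0) := by
    intro y
    exact Equiv.sum_comp (Equiv.subRight (y.1.1 : ZMod n))
      (fun i => if c (i, hpt (e + 1) k hb y) = c0 then 1 else 0)
  have hr : ∀ y : HalfIdx (e + 1) k,
      ∑ i : ZMod n, (if c (ballPt n (e + 1) k hb i (Sum.inr y)) = c0 then 1 else 0)
      = ∑ i : ZMod n, (if c (i, hpt (e + 1) k hb y) = c0 then 1 else 0) := by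
    intro y
    rw [← Equiv.sum_comp (Equiv.addRight (1 + (y.1.1 : ZMod n)))
      (fun i => if c (i, hpt (e + 1) k hb y) = c0 then 1 else 0)]
    refine Finset.sum_congr rfl (fun i _ => ?_)
    simp only [ballPt, Equiv.coe_addRight, add_assoc]
    congr
  rw [Finset.sum_congr rfl (fun y _ => hl y), Finset.sum_congr rfl (fun y _ => hr y)] at htot
  obtain ⟨q, hq⟩ := hodd
  omega

/-- For every odd `t ≥ 1`, every `d ≥ 3` and every `g`, there is a finite
planar graph of maximum degree at most `d` and girth at least `g` with `χ_t > τ_t(d)`: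
no finite girth constraint makes the distance-`t` chromatic number of planar graphs
tree-like for odd `t`. -/
theorem stmt_14 (t d g : ℕ) (ht : Odd t) (hd : 3 ≤ d) :
    ∃ (V : Type) (_ : Finite V) (G : SimpleGraph V),
      IsPlanar G ∧ (∀ v, (G.neighborSet v).ncard ≤ d) ∧ (g : ℕ∞) ≤ G.egirth ∧
      ¬ DistVertexColorable G t (tauodd t d) := by
  obtain ⟨k, rfl⟩ := ht
  obtain ⟨e, rfl⟩ : ∃ e, d = e + 2 := ⟨d - 2, by omega⟩
  have he : 1 ≤ e := by omega
  set n := 2 * (k + g) + 3 with hn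
  haveI : NeZero n := ⟨by omega⟩
  refine ⟨ZMod n × Fin ((e + 1) ^ k), inferInstance, funGraph (par n (e + 1) k),
    funGraph_planar _, fun v => par_degree n (e + 1) k (by omega) v, ?_,
    not_colorable n e k he (by omega) ⟨k + g + 1, by omega⟩⟩
  refine le_trans ?_ (par_girth n (e + 1) k (by omega))
  exact_mod_cast (by omega : g ≤ n)
end
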